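/- Let η ∈ ℂ∖{0} satisfy nη ∉ Λ for every positive integer n, let ν ∈ ℂ, and let a ∈ ℂ⁴ with a₁+a₂+a₃+a₄ = 0. Then for each t ∈ {0,1,2,3}, the operator A(a,ν) maps ℳ_t into ℳ_t; that is, if g ∈ ℳ_t then the function z ↦ f(a,ν;z)g(z+η) + f(a,ν;−z)g(z−η) belongs to ℳ_t. -/

import Mathlib

open Complex Filter

noncomputable section

/-- The Jacobi theta function `θ₁(z|τ)`. -/
def θ (τ z : ℂ) : ℂ :=
  I * ∑' n : ℤ, (-1 : ℂ) ^ n * Complex.exp (Real.pi * I * τ * ((n : ℂ) - 1/2) ^ 2) *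
    Complex.exp (Real.pi * I * (2 * (n : ℂ) - 1) * z)

/-- `f(a,ν;z) = θ(z+a₁−ν)θ(z+a₂−ν)θ(z+a₃−ν)θ(z+a₄−ν)/θ(2z)`. -/
def fcoef (τ : ℂ) (a : Fin 4 → ℂ) (ν z : ℂ) : ℂ :=
  (∏ i, θ τ (z + a i - ν)) / θ τ (2 * z)

/-- The half-periods `ω₀ = 0, ω₁ = 1/2, ω₂ = (1+τ)/2, ω₃ = τ/2`. -/
def ωh (τ : ℂ) : Fin 4 → ℂ := ![0, 1/2, (1 + τ)/2, τ/2]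

/-- `λ₀ = λ₁ = 0`, `λ₂ = λ₃ = 8iπν`. -/
def lamh (ν : ℂ) : Fin 4 → ℂ :=
  ![0, 0, 8 * Real.pi * I * ν, 8 * Real.pi * I * ν]

/-- A meromorphic function is regular (analytic after removing a removable
singularity) at a point. -/
def RegularAt (g : ℂ → ℂ) (p : ℂ) : Prop :=
  ∃ h : ℂ → ℂ, AnalyticAt ℂ h p ∧ ∀ᶠ z in nhdsWithin p {p}ᶜ, g z = h z

/-- Membership in the space `ℳ_t`: meromorphic on `ℂ`, analytic at every point
`ω_t + kη` (`k ∈ ℤ`), and satisfying `g(ω_t − z) = exp(λ_t z/η)·g(ω_t + z)`. -/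
def memM (τ η ν : ℂ) (t : Fin 4) (g : ℂ → ℂ) : Prop :=
  MeromorphicOn g Set.univ ∧ (∀ k : ℤ, RegularAt g (ωh τ t + (k : ℂ) * η)) ∧
  (∀ z, g (ωh τ t - z) = Complex.exp (lamh ν t * z / η) * g (ωh τ t + z))

/-! `θ` is a nonzero multiple of the product `exp(-πiz) (x; Q)_∞ (Q/x; Q)_∞`, where
`x = exp(2πiz)` and `Q = exp(2πiτ)`: every zero of the product is simple and is also a zero of
`θ`, so the quotient is entire, and it is doubly periodic. Hence the zeros of `θ` are exactly `Λ`,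
and they are simple. Consequently `F(z) = f(a,ν;z) g(z+η)` has at most a simple pole at `ω_t`.
Because `a` sums to zero, `f(z + 2ω_t) = exp(λ_t) f(z)`, and together with the symmetry of `g` this
shows that the operator sends `g` to the symmetrization of `F` about `ω_t`, in which the pole at
`ω_t` cancels. At `ω_t + kη` with `k ≠ 0` there is no pole at all, since `2kη ∉ Λ`.
-/

open scoped Real Topology

/-! ### Entire functions with simple zeros -/

lemma exists_eq_const_of_periodic (L : PeriodPair) {f : ℂ → ℂ} (hf : Differentiable ℂ f)
    (h₁ : Function.Periodic f L.ω₁) (h₂ : Function.Periodic f L.ω₂) : ∃ c, ∀ z, f z = c := by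
  have periodic : ∀ z w, w ∈ L.lattice → f (z + w) = f z := by
    intro z w hw
    obtain ⟨m, n, rfl⟩ := PeriodPair.mem_lattice.mp hw
    rw [← add_assoc, h₂.int_mul n, h₁.int_mul m]
  have bounded := (IsZLattice.isCompact_range_of_periodic L.lattice f hf.continuous
    periodic).isBounded
  exact ⟨f 0, fun z => hf.apply_eq_apply_of_bounded bounded z 0⟩

section DSlope

variable {𝕜 : Type*} [NontriviallyNormedField 𝕜]

lemma analyticAt_dslope_self {E : Type*} [NormedAddCommGroup E] [NormedSpace 𝕜 E] {f : 𝕜 → E}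
    {p : 𝕜} (hf : AnalyticAt 𝕜 f p) : AnalyticAt 𝕜 (dslope f p) p := by
  obtain ⟨s, hs⟩ := hf
  exact hs.has_fpower_series_dslope_fslope.analyticAt

lemma div_eq_dslope_div_dslope {f g : 𝕜 → 𝕜} {p z : 𝕜} (hf : f p = 0) (hg : g p = 0)
    (hz : z ≠ p) : f z / g z = dslope f p z / dslope g p z := by
  rw [dslope_of_ne _ hz, dslope_of_ne _ hz, slope_def_field, slope_def_field, hf, hg, sub_zero,
    sub_zero, div_div_div_cancel_right₀ (sub_ne_zero.mpr hz)]

lemma analyticAt_dslope_div_dslope {f g : 𝕜 → 𝕜} {p : 𝕜} (hf : AnalyticAt 𝕜 f p)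
    (hg : AnalyticAt 𝕜 g p) (hg' : deriv g p ≠ 0) :
    AnalyticAt 𝕜 (fun z => dslope f p z / dslope g p z) p :=
  (analyticAt_dslope_self hf).div (analyticAt_dslope_self hg) (by rwa [dslope_same])

end DSlope

lemma exists_differentiable_eq_mul_of_simple_zeros {f g : ℂ → ℂ}
    (hf : Differentiable ℂ f) (hg : Differentiable ℂ g) (hfg : ∀ p, g p = 0 → f p = 0)
    (hg' : ∀ p, g p = 0 → deriv g p ≠ 0) :
    ∃ h : ℂ → ℂ, Differentiable ℂ h ∧ ∀ z, f z = h z * g z := by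
  classical
  let h : ℂ → ℂ := fun z => if g z = 0 then deriv f z / deriv g z else f z / g z
  refine ⟨h, fun p => ?_, fun z => ?_⟩
  · by_cases hp : g p = 0
    · refine ((analyticAt_dslope_div_dslope (hf.analyticAt p) (hg.analyticAt p)
        (hg' p hp)).congr ?_).differentiableAt
      have nonzero : ∀ᶠ z in 𝓝[≠] p, g z ≠ 0 :=
        (hg p).hasDerivAt.eventually_ne (hg' p hp)
      filter_upwards [eventually_nhdsWithin_iff.mp nonzero] with z hz
      obtain rfl | hzp := eq_or_ne z p
      · simp only [h, hp, dslope_same, if_true]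
      · simp only [h, hz hzp, if_false, div_eq_dslope_div_dslope (hfg p hp) hp hzp]
    · refine ((hf p).div (hg p) hp).congr_of_eventuallyEq ?_
      filter_upwards [(hg p).continuousAt.eventually_ne hp] with z hz
      exact if_neg hz
  · by_cases hz : g z = 0
    · rw [hfg z hz, hz, mul_zero]
    · simp only [h, hz, if_false, div_mul_cancel₀, ne_eq, not_false_eq_true]

lemma eq_zero_or_eq_zero_of_mul_eq_zero {f g : ℂ → ℂ} (hf : Differentiable ℂ f)
    (hg : Differentiable ℂ g) (hfg : ∀ z, f z * g z = 0) : (∀ z, f z = 0) ∨ ∀ z, g z = 0 := by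
  simpa only [Set.mem_univ, true_imp_iff] using
    AnalyticOnNhd.eq_zero_or_eq_zero_of_mul_eq_zero (fun z _ => hf.analyticAt z)
      (fun z _ => hg.analyticAt z) (fun z _ => hfg z) isPreconnected_univ

lemma exists_eq_const_mul_of_simple_zeros (L : PeriodPair) {f g : ℂ → ℂ} (hf : Differentiable ℂ f)
    (hg : Differentiable ℂ g) (hfg : ∀ p, g p = 0 → f p = 0)
    (hg' : ∀ p, g p = 0 → deriv g p ≠ 0)
    (h₁ : ∀ z, f (z + L.ω₁) * g z = f z * g (z + L.ω₁))
    (h₂ : ∀ z, f (z + L.ω₂) * g z = f z * g (z + L.ω₂)) :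
    ∃ c, ∀ z, f z = c * g z := by
  obtain ⟨h, hh, hfh⟩ := exists_differentiable_eq_mul_of_simple_zeros hf hg hfg hg'
  obtain ⟨w, hw⟩ : ∃ w, g w ≠ 0 := by
    by_contra! hg0
    exact hg' 0 (hg0 0) (by rw [show g = fun _ => 0 from funext hg0, deriv_const])
  have periodic : ∀ ω, (∀ z, f (z + ω) * g z = f z * g (z + ω)) → Function.Periodic h ω := by
    intro ω hω
    have cancel : ∀ z, (h (z + ω) - h z) * (g (z + ω) * g z) = 0 := fun z => by
      linear_combination hω z - g z * hfh (z + ω) + g (z + ω) * hfh z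
    have hhω : Differentiable ℂ fun z => h (z + ω) - h z := by fun_prop
    have hgω : Differentiable ℂ fun z => g (z + ω) := by fun_prop
    rcases eq_zero_or_eq_zero_of_mul_eq_zero hhω (hgω.mul hg) cancel with h0 | h0
    · exact fun z => sub_eq_zero.mp (h0 z)
    · rcases eq_zero_or_eq_zero_of_mul_eq_zero hgω hg h0 with h0 | h0
      · exact absurd (by simpa only [sub_add_cancel] using h0 (w - ω)) hw
      · exact absurd (h0 w) hw
  obtain ⟨c, hc⟩ := exists_eq_const_of_periodic L hh (periodic _ h₁) (periodic _ h₂)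
  exact ⟨c, fun z => by rw [hfh, hc]⟩

/-! ### Quasi-periods and the lattice `Λ` -/

/-- The group of quasi-periods of `f`: translation by `ω` multiplies `f` by a nowhere vanishing
entire function. Translation by a quasi-period permutes the zeros of `f`. -/
def quasiPeriods (f : ℂ → ℂ) : AddSubgroup ℂ where
  carrier := {ω | ∃ e : ℂ → ℂ, Differentiable ℂ e ∧ (∀ z, e z ≠ 0) ∧
    ∀ z, f (z + ω) = e z * f z}
  zero_mem' := ⟨fun _ => 1, by fun_prop, fun _ => one_ne_zero, fun z => by simp⟩
  add_mem' := by
    rintro ω ω' ⟨e, he, he0, hf⟩ ⟨e', he', he0', hf'⟩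
    refine ⟨fun z => e' (z + ω) * e z, by fun_prop, fun z => mul_ne_zero (he0' _) (he0 _),
      fun z => ?_⟩
    rw [← add_assoc, hf', hf, mul_assoc]
  neg_mem' := by
    rintro ω ⟨e, he, he0, hf⟩
    refine ⟨fun z => (e (z + -ω))⁻¹, fun z => ?_, fun z => inv_ne_zero (he0 _), fun z => ?_⟩
    · exact DifferentiableAt.inv (by fun_prop) (he0 _)
    · rw [eq_inv_mul_iff_mul_eq₀ (he0 _), ← hf, neg_add_cancel_right]

namespace quasiPeriods

variable {f : ℂ → ℂ} {ω : ℂ}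

lemma apply_add_eq_zero_iff (hω : ω ∈ quasiPeriods f) (z : ℂ) : f (z + ω) = 0 ↔ f z = 0 := by
  obtain ⟨e, -, he0, hf⟩ := hω
  rw [hf, mul_eq_zero, or_iff_right (he0 z)]

lemma deriv_add_ne_zero (hω : ω ∈ quasiPeriods f) (hd : Differentiable ℂ f) {p : ℂ}
    (hp : f p = 0) (hp' : deriv f p ≠ 0) : deriv f (p + ω) ≠ 0 := by
  obtain ⟨e, he, he0, hf⟩ := hω
  have eq : deriv f (p + ω) = deriv e p * f p + e p * deriv f p := by
    rw [← deriv_comp_add_const, funext hf]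
    exact deriv_fun_mul (he p) (hd p)
  rw [eq, hp, mul_zero, zero_add]
  exact mul_ne_zero (he0 p) hp'

lemma mem_of_mem_lattice {L : PeriodPair} (h₁ : L.ω₁ ∈ quasiPeriods f)
    (h₂ : L.ω₂ ∈ quasiPeriods f) (hω : ω ∈ L.lattice) : ω ∈ quasiPeriods f := by
  obtain ⟨m, n, rfl⟩ := PeriodPair.mem_lattice.mp hω
  simpa only [zsmul_eq_mul] using add_mem (zsmul_mem h₁ m) (zsmul_mem h₂ n)

end quasiPeriods

/-- The period pair `(1, τ)` of a point `τ` of the upper half-plane, whose lattice is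
`Λ = ℤ + τℤ`. -/
@[simps ω₁ ω₂]
def upperPeriodPair {τ : ℂ} (hτ : 0 < τ.im) : PeriodPair where
  ω₁ := 1
  ω₂ := τ
  indep := by
    refine LinearIndependent.pair_iff.mpr fun s t h => ?_
    have him := congrArg Complex.im h
    have hre := congrArg Complex.re h
    simp only [real_smul, add_im, im_ofReal_mul, one_im, mul_zero, zero_add,
      zero_im, mul_eq_zero, hτ.ne', or_false] at him
    simp only [him, real_smul, mul_one, ofReal_zero, zero_mul, add_zero, ofReal_re, zero_re] at hre
    exact ⟨hre, him⟩

lemma mem_lattice_upperPeriodPair {τ : ℂ} (hτ : 0 < τ.im) {z : ℂ} :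
    z ∈ (upperPeriodPair hτ).lattice ↔ ∃ m l : ℤ, z = m + τ * l := by
  simp only [PeriodPair.mem_lattice, upperPeriodPair_ω₁, upperPeriodPair_ω₂, mul_one,
    mul_comm τ, eq_comm]

/-! ### The triple product -/

/-- The infinite `q`-Pochhammer symbol `(x; q)_∞ = ∏_{n ≥ 0} (1 - x qⁿ)`, meaningful
for `‖q‖ < 1`. -/
def qPochhammer (q x : ℂ) : ℂ :=
  ∏' n : ℕ, (1 - x * q ^ n)

namespace qPochhammer

variable {q : ℂ}

lemma summable_norm_term (hq : ‖q‖ < 1) (x : ℂ) : Summable fun n : ℕ => ‖-(x * q ^ n)‖ := by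
  simpa only [norm_neg, norm_mul, norm_pow] using
    (summable_geometric_of_lt_one (norm_nonneg q) hq).mul_left ‖x‖

protected lemma differentiable (hq : ‖q‖ < 1) : Differentiable ℂ (qPochhammer q) := by
  have hprod : HasProdLocallyUniformlyOn (fun n x => 1 + -(x * q ^ n))
      (fun x => ∏' n : ℕ, (1 + -(x * q ^ n))) Set.univ := by
    refine hasProdLocallyUniformlyOn_of_forall_compact isOpen_univ fun K _ hK => ?_
    obtain ⟨R, hR⟩ := hK.isBounded.exists_norm_le
    refine ((summable_geometric_of_lt_one (norm_nonneg q) hq).mul_left R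
      ).hasProdUniformlyOn_nat_one_add hK (.of_forall fun n x hx => ?_) fun n => by fun_prop
    rw [norm_neg, norm_mul, norm_pow]
    gcongr
    exact hR x hx
  refine differentiableOn_univ.mp (hprod.differentiableOn (.of_forall fun s => ?_) isOpen_univ)
  simpa only [Finset.prod_fn] using DifferentiableOn.finsetProd fun n _ => by fun_prop

protected lemma eq_mul (hq : ‖q‖ < 1) (x : ℂ) :
    qPochhammer q x = (1 - x) * qPochhammer q (x * q) := by
  have hmul : Multipliable fun n : ℕ => 1 + -(x * q ^ (n + 1)) := by
    refine multipliable_one_add_of_summable ?_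
    simpa only [pow_succ', mul_assoc] using summable_norm_term hq (x * q)
  simp only [← sub_eq_add_neg] at hmul
  rw [qPochhammer, tprod_eq_zero_mul' (f := fun n : ℕ => 1 - x * q ^ n) hmul, pow_zero, mul_one]
  simp only [qPochhammer, pow_succ', mul_assoc]

protected lemma eq_zero_iff (hq : ‖q‖ < 1) {x : ℂ} :
    qPochhammer q x = 0 ↔ ∃ n : ℕ, x * q ^ n = 1 := by
  refine ⟨fun h => ?_, fun ⟨n, hn⟩ => tprod_of_exists_eq_zero ⟨n, by rw [hn, sub_self]⟩⟩
  by_contra! hne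
  refine tprod_one_add_ne_zero_of_summable (f := fun n : ℕ => -(x * q ^ n)) (fun n => ?_)
    (summable_norm_term hq x) (by simpa only [← sub_eq_add_neg, qPochhammer] using h)
  rw [← sub_eq_add_neg]
  exact sub_ne_zero.mpr (hne n).symm

lemma self_ne_zero (hq : ‖q‖ < 1) : qPochhammer q q ≠ 0 := by
  rw [Ne, qPochhammer.eq_zero_iff hq]
  rintro ⟨n, hn⟩
  rw [← pow_succ'] at hn
  exact (pow_lt_one₀ (norm_nonneg q) hq n.succ_ne_zero).ne (by rw [← norm_pow, hn, norm_one])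

end qPochhammer

lemma norm_exp_two_pi_I_mul_lt_one {τ : ℂ} (hτ : 0 < τ.im) : ‖cexp (2 * π * I * τ)‖ < 1 := by
  rw [norm_exp, Real.exp_lt_one_iff]
  simpa using mul_pos Real.two_pi_pos hτ

/-- The product side of the Jacobi triple product identity for `θ₁`, without the constant factor:
`exp(-πiz) (x; Q)_∞ (Q/x; Q)_∞` with `x = exp(2πiz)` and `Q = q² = exp(2πiτ)`. -/
def thetaProd (τ z : ℂ) : ℂ :=
  cexp (-(π * I * z)) * (qPochhammer (cexp (2 * π * I * τ)) (cexp (2 * π * I * z)) *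
    qPochhammer (cexp (2 * π * I * τ)) (cexp (2 * π * I * (τ - z))))

namespace thetaProd

variable {τ : ℂ}

protected lemma differentiable (hτ : 0 < τ.im) : Differentiable ℂ (thetaProd τ) := by
  have hφ := qPochhammer.differentiable (norm_exp_two_pi_I_mul_lt_one hτ)
  unfold thetaProd
  fun_prop

lemma add_one (τ z : ℂ) : thetaProd τ (z + 1) = -thetaProd τ z := by
  have h₁ : cexp (-(π * I * (z + 1))) = -cexp (-(π * I * z)) := by
    rw [← exp_sub_pi_mul_I]
    congr 1
    ring
  have h₂ : cexp (2 * π * I * (z + 1)) = cexp (2 * π * I * z) := by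
    rw [mul_add, mul_one, exp_add, exp_two_pi_mul_I, mul_one]
  have h₃ : cexp (2 * π * I * (τ - (z + 1))) = cexp (2 * π * I * (τ - z)) := by
    rw [← sub_sub, mul_sub _ _ 1, mul_one, exp_sub _ (2 * π * I), exp_two_pi_mul_I, div_one]
  rw [thetaProd, thetaProd, h₁, h₂, h₃, neg_mul]

lemma add_tau (hτ : 0 < τ.im) (z : ℂ) :
    thetaProd τ (z + τ) = -cexp (-(π * I * τ) - 2 * π * I * z) * thetaProd τ z := by
  have hQ := norm_exp_two_pi_I_mul_lt_one hτ
  have h₁ : cexp (2 * π * I * z) * cexp (2 * π * I * τ) = cexp (2 * π * I * (z + τ)) := by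
    rw [← exp_add, mul_add]
  have h₂ : cexp (2 * π * I * (τ - (z + τ))) * cexp (2 * π * I * τ) =
      cexp (2 * π * I * (τ - z)) := by
    rw [← exp_add]
    congr 1
    ring
  have h₃ : cexp (-(π * I * (z + τ))) * (1 - cexp (2 * π * I * (τ - (z + τ)))) =
      -cexp (-(π * I * τ) - 2 * π * I * z) *
        (cexp (-(π * I * z)) * (1 - cexp (2 * π * I * z))) := by
    simp only [neg_mul, mul_sub, mul_one, ← exp_add]
    ring_nf
  have hx := qPochhammer.eq_mul hQ (cexp (2 * π * I * z))
  have hy := qPochhammer.eq_mul hQ (cexp (2 * π * I * (τ - (z + τ))))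
  rw [h₁] at hx
  rw [h₂] at hy
  rw [thetaProd, thetaProd, hx, hy]
  linear_combination (qPochhammer (cexp (2 * π * I * τ)) (cexp (2 * π * I * (z + τ))) *
    qPochhammer (cexp (2 * π * I * τ)) (cexp (2 * π * I * (τ - z)))) * h₃

lemma one_mem_quasiPeriods (τ : ℂ) : 1 ∈ quasiPeriods (thetaProd τ) :=
  ⟨fun _ => -1, by fun_prop, fun _ => neg_ne_zero.mpr one_ne_zero, fun z => by
    rw [add_one, neg_one_mul]⟩

lemma tau_mem_quasiPeriods (hτ : 0 < τ.im) : τ ∈ quasiPeriods (thetaProd τ) :=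
  ⟨fun z => -cexp (-(π * I * τ) - 2 * π * I * z), by fun_prop,
    fun _ => neg_ne_zero.mpr (exp_ne_zero _), add_tau hτ⟩

lemma mem_lattice_of_eq_zero (hτ : 0 < τ.im) {z : ℂ} (hz : thetaProd τ z = 0) :
    z ∈ (upperPeriodPair hτ).lattice := by
  have hQ := norm_exp_two_pi_I_mul_lt_one hτ
  simp only [thetaProd, mul_eq_zero, exp_ne_zero, false_or, qPochhammer.eq_zero_iff hQ,
    ← exp_nat_mul, ← exp_add, exp_eq_one_iff] at hz
  rw [mem_lattice_upperPeriodPair]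
  obtain ⟨n, k, hk⟩ | ⟨n, k, hk⟩ := hz
  · refine ⟨k, -n, mul_left_cancel₀ two_pi_I_ne_zero ?_⟩
    push_cast
    linear_combination hk
  · refine ⟨-k, n + 1, mul_left_cancel₀ two_pi_I_ne_zero ?_⟩
    push_cast
    linear_combination -hk

lemma deriv_zero_ne_zero (hτ : 0 < τ.im) : deriv (thetaProd τ) 0 ≠ 0 := by
  have hQ := norm_exp_two_pi_I_mul_lt_one hτ
  set Q := cexp (2 * π * I * τ) with hQ_def
  have hφ := qPochhammer.differentiable hQ
  let G : ℂ → ℂ := fun z => cexp (-(π * I * z)) * (qPochhammer Q (cexp (2 * π * I * z) * Q) *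
    qPochhammer Q (cexp (2 * π * I * (τ - z))))
  have hG : Differentiable ℂ G := by fun_prop
  have factor : thetaProd τ = fun z => (1 - cexp (2 * π * I * z)) * G z := by
    ext z
    rw [thetaProd, ← hQ_def, qPochhammer.eq_mul hQ (cexp (2 * π * I * z))]
    ring
  have hexp : HasDerivAt (fun z : ℂ => 1 - cexp (2 * π * I * z)) (-(2 * π * I)) 0 := by
    simpa using (((hasDerivAt_id (0 : ℂ)).const_mul (2 * π * I)).cexp).const_sub 1
  have hG0 : G 0 = qPochhammer Q Q * qPochhammer Q Q := by simp [G, hQ_def]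
  rw [factor, (hexp.fun_mul (hG 0).hasDerivAt).deriv, hG0, mul_zero, exp_zero, sub_self, zero_mul,
    add_zero]
  exact mul_ne_zero (neg_ne_zero.mpr two_pi_I_ne_zero)
    (mul_self_ne_zero.mpr (qPochhammer.self_ne_zero hQ))

lemma deriv_ne_zero (hτ : 0 < τ.im) {z : ℂ} (hz : thetaProd τ z = 0) :
    deriv (thetaProd τ) z ≠ 0 := by
  have quasi : z ∈ quasiPeriods (thetaProd τ) := quasiPeriods.mem_of_mem_lattice
    (L := upperPeriodPair hτ) (one_mem_quasiPeriods τ) (tau_mem_quasiPeriods hτ)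
    (mem_lattice_of_eq_zero hτ hz)
  have zero : thetaProd τ 0 = 0 := by
    rwa [← zero_add z, quasiPeriods.apply_add_eq_zero_iff quasi] at hz
  have h := quasiPeriods.deriv_add_ne_zero quasi (thetaProd.differentiable hτ) zero
    (deriv_zero_ne_zero hτ)
  rwa [zero_add] at h

end thetaProd

/-! ### The theta function -/

lemma integral_jacobiTheta₂_term (n : ℤ) (τ : ℂ) :
    ∫ x in (0 : ℝ)..1, jacobiTheta₂_term n x τ = if n = 0 then 1 else 0 := by
  split_ifs with hn
  · simp [hn, jacobiTheta₂_term]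
  · have hc : 2 * π * I * n ≠ 0 := mul_ne_zero two_pi_I_ne_zero (Int.cast_ne_zero.mpr hn)
    simp only [jacobiTheta₂_term, exp_add, intervalIntegral.integral_mul_const,
      integral_exp_mul_complex hc]
    rw [ofReal_one, mul_one, ofReal_zero, mul_zero, mul_comm _ (n : ℂ),
      exp_int_mul_two_pi_mul_I, exp_zero, sub_self, zero_div, zero_mul]

lemma integral_jacobiTheta₂ {τ : ℂ} (hτ : 0 < τ.im) :
    ∫ x in (0 : ℝ)..1, jacobiTheta₂ x τ = 1 := by
  have norm_term : ∀ (n : ℤ) (x : ℝ), ‖jacobiTheta₂_term n x τ‖ = ‖jacobiTheta₂_term n 0 τ‖ := by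
    simp [norm_jacobiTheta₂_term]
  have hsum : HasSum (fun n : ℤ => ∫ x in (0 : ℝ)..1, jacobiTheta₂_term n x τ)
      (∫ x in (0 : ℝ)..1, jacobiTheta₂ x τ) := by
    refine intervalIntegral.hasSum_integral_of_dominated_convergence
      (fun n _ => ‖jacobiTheta₂_term n 0 τ‖) (fun n => ?_)
      (fun n => .of_forall fun x _ => (norm_term n x).le)
      (.of_forall fun _ _ => (hasSum_jacobiTheta₂_term 0 hτ).summable.norm)
      intervalIntegrable_const (.of_forall fun x _ => hasSum_jacobiTheta₂_term x hτ)
    exact Continuous.aestronglyMeasurable (by unfold jacobiTheta₂_term; fun_prop)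
  simp only [integral_jacobiTheta₂_term] at hsum
  exact hsum.unique (hasSum_ite_eq 0 1)

lemma exists_jacobiTheta₂_ne_zero {τ : ℂ} (hτ : 0 < τ.im) : ∃ z, jacobiTheta₂ z τ ≠ 0 := by
  by_contra! h
  have := integral_jacobiTheta₂ hτ
  simp only [h, intervalIntegral.integral_zero, zero_ne_one] at this

namespace θ

lemma eq_jacobiTheta₂ (τ z : ℂ) :
    θ τ z = I * cexp (π * I * τ / 4 - π * I * z) * jacobiTheta₂ (z + (1 - τ) / 2) τ := by
  rw [θ, jacobiTheta₂, mul_assoc I (cexp _), ← tsum_mul_left (a := cexp _)]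
  refine congrArg (I * ·) (tsum_congr fun n => ?_)
  rw [jacobiTheta₂_term, ← exp_pi_mul_I, ← exp_int_mul, ← exp_add, ← exp_add, ← exp_add]
  congr 1
  ring

protected lemma differentiable {τ : ℂ} (hτ : 0 < τ.im) : Differentiable ℂ (θ τ) := by
  have hJ : Differentiable ℂ fun z => jacobiTheta₂ z τ :=
    fun z => differentiableAt_jacobiTheta₂_fst z hτ
  rw [funext (eq_jacobiTheta₂ τ)]
  fun_prop

lemma add_one (τ z : ℂ) : θ τ (z + 1) = -θ τ z := by
  have h : cexp (π * I * τ / 4 - π * I * (z + 1)) = -cexp (π * I * τ / 4 - π * I * z) := by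
    rw [mul_add, mul_one, ← sub_sub, exp_sub_pi_mul_I]
  rw [eq_jacobiTheta₂, eq_jacobiTheta₂, add_right_comm, jacobiTheta₂_add_left, h]
  ring

lemma add_tau (τ z : ℂ) : θ τ (z + τ) = -cexp (-(π * I * τ) - 2 * π * I * z) * θ τ z := by
  have h : cexp (π * I * τ / 4 - π * I * (z + τ)) *
      cexp (-π * I * (τ + 2 * (z + (1 - τ) / 2))) =
      -(cexp (-(π * I * τ) - 2 * π * I * z) * cexp (π * I * τ / 4 - π * I * z)) := by
    rw [← exp_add, ← exp_add, ← exp_sub_pi_mul_I]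
    congr 1
    ring
  rw [eq_jacobiTheta₂, eq_jacobiTheta₂, add_right_comm, jacobiTheta₂_add_left']
  linear_combination I * jacobiTheta₂ (z + (1 - τ) / 2) τ * h

protected lemma neg (τ z : ℂ) : θ τ (-z) = -θ τ z := by
  rw [θ, θ, ← (Equiv.subLeft (1 : ℤ)).tsum_eq, ← mul_neg, ← tsum_neg]
  refine congrArg (I * ·) (tsum_congr fun n => ?_)
  have sign : (-1 : ℂ) ^ (1 - n) = -(-1) ^ n := by
    rw [zpow_sub₀ (neg_ne_zero.mpr one_ne_zero), zpow_one, neg_div, one_div, ← inv_zpow, inv_neg,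
      inv_one]
  have gaussian : ((1 - n : ℤ) - 1 / 2 : ℂ) ^ 2 = (n - 1 / 2) ^ 2 := by
    push_cast
    ring
  have wave : π * I * (2 * (1 - n : ℤ) - 1) * -z = π * I * (2 * n - 1) * z := by
    push_cast
    ring
  rw [Equiv.subLeft_apply, sign, gaussian, wave, neg_mul, neg_mul]

lemma apply_zero (τ : ℂ) : θ τ 0 = 0 :=
  self_eq_neg.mp (by simpa only [neg_zero] using θ.neg τ 0)

lemma exists_ne_zero {τ : ℂ} (hτ : 0 < τ.im) : ∃ z, θ τ z ≠ 0 := by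
  obtain ⟨z, hz⟩ := exists_jacobiTheta₂_ne_zero hτ
  refine ⟨z - (1 - τ) / 2, ?_⟩
  rw [eq_jacobiTheta₂, sub_add_cancel]
  exact mul_ne_zero (mul_ne_zero I_ne_zero (exp_ne_zero _)) hz

lemma one_mem_quasiPeriods (τ : ℂ) : 1 ∈ quasiPeriods (θ τ) :=
  ⟨fun _ => -1, by fun_prop, fun _ => neg_ne_zero.mpr one_ne_zero, fun z => by
    rw [add_one, neg_one_mul]⟩

lemma tau_mem_quasiPeriods (τ : ℂ) : τ ∈ quasiPeriods (θ τ) :=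
  ⟨fun z => -cexp (-(π * I * τ) - 2 * π * I * z), by fun_prop,
    fun _ => neg_ne_zero.mpr (exp_ne_zero _), add_tau τ⟩

lemma apply_eq_zero_of_mem_lattice {τ : ℂ} (hτ : 0 < τ.im) {z : ℂ}
    (hz : z ∈ (upperPeriodPair hτ).lattice) : θ τ z = 0 := by
  have h := quasiPeriods.apply_add_eq_zero_iff (quasiPeriods.mem_of_mem_lattice
    (one_mem_quasiPeriods τ) (tau_mem_quasiPeriods τ) hz) 0
  rw [zero_add] at h
  exact h.mpr (apply_zero τ)

/-- The Jacobi triple product identity for `θ₁`, up to the value of the constant. -/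
lemma exists_eq_const_mul_thetaProd {τ : ℂ} (hτ : 0 < τ.im) :
    ∃ c ≠ 0, ∀ z, θ τ z = c * thetaProd τ z := by
  obtain ⟨c, hc⟩ := exists_eq_const_mul_of_simple_zeros (upperPeriodPair hτ) (θ.differentiable hτ)
    (thetaProd.differentiable hτ)
    (fun p hp => apply_eq_zero_of_mem_lattice hτ (thetaProd.mem_lattice_of_eq_zero hτ hp))
    (fun p hp => thetaProd.deriv_ne_zero hτ hp)
    (fun z => by simp only [upperPeriodPair_ω₁, add_one, thetaProd.add_one, neg_mul_comm])
    (fun z => by simp only [upperPeriodPair_ω₂, add_tau, thetaProd.add_tau hτ]; ring)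
  refine ⟨c, ?_, hc⟩
  rintro rfl
  obtain ⟨z, hz⟩ := exists_ne_zero hτ
  exact hz (by rw [hc, zero_mul])

lemma eq_zero_iff {τ : ℂ} (hτ : 0 < τ.im) {z : ℂ} :
    θ τ z = 0 ↔ z ∈ (upperPeriodPair hτ).lattice := by
  refine ⟨fun hz => ?_, apply_eq_zero_of_mem_lattice hτ⟩
  obtain ⟨c, hc, h⟩ := exists_eq_const_mul_thetaProd hτ
  rw [h, mul_eq_zero, or_iff_right hc] at hz
  exact thetaProd.mem_lattice_of_eq_zero hτ hz

lemma deriv_ne_zero {τ : ℂ} (hτ : 0 < τ.im) {z : ℂ} (hz : θ τ z = 0) : deriv (θ τ) z ≠ 0 := by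
  obtain ⟨c, hc, h⟩ := exists_eq_const_mul_thetaProd hτ
  rw [h, mul_eq_zero, or_iff_right hc] at hz
  rw [funext h, deriv_const_mul_field]
  exact mul_ne_zero hc (thetaProd.deriv_ne_zero hτ hz)

end θ

/-! ### Regularity and symmetrization -/

namespace RegularAt

variable {g h φ : ℂ → ℂ} {p : ℂ}

lemma of_analyticAt (hg : AnalyticAt ℂ g p) : RegularAt g p :=
  ⟨g, hg, .of_forall fun _ => rfl⟩

lemma add (hg : RegularAt g p) (hh : RegularAt h p) : RegularAt (fun z => g z + h z) p := by
  obtain ⟨G, hG, eG⟩ := hg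
  obtain ⟨H, hH, eH⟩ := hh
  exact ⟨fun z => G z + H z, hG.add hH, by filter_upwards [eG, eH] with z h₁ h₂; rw [h₁, h₂]⟩

lemma mul (hg : RegularAt g p) (hh : RegularAt h p) : RegularAt (fun z => g z * h z) p := by
  obtain ⟨G, hG, eG⟩ := hg
  obtain ⟨H, hH, eH⟩ := hh
  exact ⟨fun z => G z * H z, hG.mul hH, by filter_upwards [eG, eH] with z h₁ h₂; rw [h₁, h₂]⟩

lemma comp_injective (hg : RegularAt g (φ p)) (hφ : AnalyticAt ℂ φ p)
    (hinj : Function.Injective φ) : RegularAt (fun z => g (φ z)) p := by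
  obtain ⟨G, hG, eG⟩ := hg
  exact ⟨fun z => G (φ z), hG.comp hφ,
    (hφ.continuousAt.continuousWithinAt.tendsto_nhdsWithin fun _ hz => hinj.ne hz).eventually eG⟩

end RegularAt

/-- The symmetrization `S(z) = F(z) + exp(-μ(z-p)) F(2p-z)` of `F` about the point `p`. It
satisfies `S(p-z) = exp(μz) S(p+z)`, which is the symmetry condition of `ℳ_t` for `p = ω_t` and
`μ = λ_t/η`. -/
def symmetrize (μ p : ℂ) (F : ℂ → ℂ) (z : ℂ) : ℂ :=
  F z + cexp (-(μ * (z - p))) * F (2 * p - z)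

namespace symmetrize

variable {μ p q : ℂ} {F : ℂ → ℂ}

lemma apply_sub (μ p : ℂ) (F : ℂ → ℂ) (z : ℂ) :
    symmetrize μ p F (p - z) = cexp (μ * z) * symmetrize μ p F (p + z) := by
  have reflect_sub : 2 * p - (p - z) = p + z := by ring
  have reflect_add : 2 * p - (p + z) = p - z := by ring
  have cancel : cexp (μ * z) * cexp (-(μ * z)) = 1 := by
    rw [← exp_add, add_neg_cancel, exp_zero]
  simp only [symmetrize, reflect_sub, reflect_add, sub_sub_cancel_left, add_sub_cancel_left,
    mul_neg, neg_neg]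
  linear_combination -F (p - z) * cancel

protected lemma meromorphicAt (hq : MeromorphicAt F q) (hq' : MeromorphicAt F (2 * p - q)) :
    MeromorphicAt (symmetrize μ p F) q :=
  hq.add (MeromorphicAt.mul (AnalyticAt.meromorphicAt (by fun_prop))
    (hq'.comp_analyticAt (g := fun z => 2 * p - z) (by fun_prop)))

protected lemma regularAt (hq : RegularAt F q) (hq' : RegularAt F (2 * p - q)) :
    RegularAt (symmetrize μ p F) q :=
  hq.add ((RegularAt.of_analyticAt (by fun_prop)).mul
    (RegularAt.comp_injective (φ := fun z => 2 * p - z) hq' (by fun_prop) sub_right_injective))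

/-- The residue at `p` changes sign under the reflection `z ↦ 2p - z`, so a simple pole of `F`
at `p` cancels. -/
lemma regularAt_center (hF : RegularAt (fun z => (z - p) * F z) p) :
    RegularAt (symmetrize μ p F) p := by
  have center : 2 * p - p = p := by ring
  have reflect : Tendsto (fun z => 2 * p - z) (𝓝[≠] p) (𝓝[≠] p) := by
    have h := (Continuous.continuousWithinAt (f := fun z => 2 * p - z) (s := {p}ᶜ) (x := p)
      (by fun_prop)).tendsto_nhdsWithin (t := {2 * p - p}ᶜ)
      fun z hz => sub_right_injective.ne hz
    rwa [center] at h
  obtain ⟨K, hK, eK⟩ := hF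
  have hKr : AnalyticAt ℂ (fun z => K (2 * p - z)) p :=
    AnalyticAt.fun_comp (by rwa [center]) (by fun_prop)
  have hε : AnalyticAt ℂ (fun z => cexp (-(μ * (z - p)))) p := by fun_prop
  refine ⟨dslope (fun z => K z - cexp (-(μ * (z - p))) * K (2 * p - z)) p,
    analyticAt_dslope_self (hK.sub (hε.mul hKr)), ?_⟩
  filter_upwards [eK, reflect.eventually eK, eventually_mem_nhdsWithin] with z h₁ h₂ hz
  rw [dslope_of_ne _ hz, slope_def_field, center, sub_self p, mul_zero, neg_zero, exp_zero,
    one_mul, sub_self, sub_zero, ← h₁, ← h₂, eq_div_iff (sub_ne_zero.mpr hz), symmetrize]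
  ring

end symmetrize

/-! ### The difference operator -/

namespace fcoef

variable {τ : ℂ}

lemma add_one (τ : ℂ) (a : Fin 4 → ℂ) (ν z : ℂ) : fcoef τ a ν (z + 1) = fcoef τ a ν z := by
  have num : ∀ i, θ τ (z + 1 + a i - ν) = -θ τ (z + a i - ν) := fun i => by
    rw [← θ.add_one]
    congr 1
    ring
  have den : θ τ (2 * (z + 1)) = θ τ (2 * z) := by
    rw [mul_add, mul_one, ← one_add_one_eq_two, ← add_assoc, θ.add_one, θ.add_one, neg_neg]
  simp only [fcoef, num, den, Fin.prod_univ_four]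
  ring

lemma add_tau (τ : ℂ) (a : Fin 4 → ℂ) (ν z : ℂ) :
    fcoef τ a ν (z + τ) = cexp (8 * π * I * ν - 2 * π * I * ∑ i, a i) * fcoef τ a ν z := by
  have num : ∀ i, θ τ (z + τ + a i - ν) =
      -cexp (-(π * I * τ) - 2 * π * I * (z + a i - ν)) * θ τ (z + a i - ν) := fun i => by
    rw [← θ.add_tau]
    congr 1
    ring
  have den : θ τ (2 * (z + τ)) =
      cexp (-(4 * π * I * τ) - 8 * π * I * z) * θ τ (2 * z) := by
    rw [mul_add, two_mul τ, ← add_assoc, θ.add_tau, θ.add_tau, ← mul_assoc, neg_mul_neg,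
      ← exp_add]
    ring_nf
  have factor : ∏ i, -cexp (-(π * I * τ) - 2 * π * I * (z + a i - ν)) =
      cexp (-(4 * π * I * τ) - 8 * π * I * z) * cexp (8 * π * I * ν - 2 * π * I * ∑ i, a i) := by
    simp only [Fin.prod_univ_four, Fin.sum_univ_four, mul_neg, neg_neg, neg_mul, ← exp_add]
    ring_nf
  simp only [fcoef, num, den, Finset.prod_mul_distrib, factor]
  rw [mul_assoc, mul_div_mul_left _ _ (exp_ne_zero _), mul_div_assoc]

lemma add_two_mul_ωh (τ : ℂ) {a : Fin 4 → ℂ} (ha : ∑ i, a i = 0) (ν z : ℂ) (t : Fin 4) :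
    fcoef τ a ν (z + 2 * ωh τ t) = cexp (lamh ν t) * fcoef τ a ν z := by
  have tau : ∀ w, fcoef τ a ν (w + τ) = cexp (8 * π * I * ν) * fcoef τ a ν w := fun w => by
    rw [add_tau, ha, mul_zero, sub_zero]
  fin_cases t
  · simp [ωh, lamh]
  · simp [ωh, lamh, add_one]
  · simp [ωh, lamh, mul_div_cancel₀, ← add_assoc, tau, add_one]
  · simp [ωh, lamh, mul_div_cancel₀, tau]

lemma differentiable_num (hτ : 0 < τ.im) (a : Fin 4 → ℂ) (ν : ℂ) :
    Differentiable ℂ fun z => ∏ i, θ τ (z + a i - ν) := by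
  have := θ.differentiable hτ
  fun_prop

lemma differentiable_den (hτ : 0 < τ.im) : Differentiable ℂ fun z => θ τ (2 * z) := by
  have := θ.differentiable hτ
  fun_prop

protected lemma meromorphicAt (hτ : 0 < τ.im) (a : Fin 4 → ℂ) (ν z : ℂ) :
    MeromorphicAt (fcoef τ a ν) z :=
  ((differentiable_num hτ a ν).analyticAt z).meromorphicAt.div
    ((differentiable_den hτ).analyticAt z).meromorphicAt

protected lemma analyticAt (hτ : 0 < τ.im) (a : Fin 4 → ℂ) (ν : ℂ) {p : ℂ}
    (hp : θ τ (2 * p) ≠ 0) : AnalyticAt ℂ (fcoef τ a ν) p :=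
  ((differentiable_num hτ a ν).analyticAt p).div ((differentiable_den hτ).analyticAt p) hp

lemma regularAt_sub_mul (hτ : 0 < τ.im) (a : Fin 4 → ℂ) (ν p : ℂ) :
    RegularAt (fun z => (z - p) * fcoef τ a ν z) p := by
  by_cases hp : θ τ (2 * p) = 0
  · have simple : deriv (fun z => θ τ (2 * z)) p ≠ 0 := by
      rw [deriv_comp_mul_left]
      exact smul_ne_zero two_ne_zero (θ.deriv_ne_zero hτ hp)
    refine ⟨fun z => (∏ i, θ τ (z + a i - ν)) *
      (dslope (fun z => z - p) p z / dslope (fun z => θ τ (2 * z)) p z),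
      ((differentiable_num hτ a ν).analyticAt p).mul (analyticAt_dslope_div_dslope
        (by fun_prop) ((differentiable_den hτ).analyticAt p) simple), ?_⟩
    filter_upwards [eventually_mem_nhdsWithin] with z hz
    rw [fcoef, ← div_eq_dslope_div_dslope (f := fun z => z - p) (g := fun z => θ τ (2 * z))
      (sub_self p) hp hz, mul_div_left_comm]
  · exact RegularAt.of_analyticAt (AnalyticAt.mul (by fun_prop) (fcoef.analyticAt hτ a ν hp))

end fcoef

lemma two_mul_ωh_mem_lattice {τ : ℂ} (hτ : 0 < τ.im) (t : Fin 4) :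
    2 * ωh τ t ∈ (upperPeriodPair hτ).lattice := by
  rw [mem_lattice_upperPeriodPair]
  fin_cases t
  · exact ⟨0, 0, by simp [ωh]⟩
  · exact ⟨1, 0, by simp [ωh]⟩
  · exact ⟨1, 1, by simp [ωh, mul_div_cancel₀]⟩
  · exact ⟨0, 1, by simp [ωh, mul_div_cancel₀]⟩

lemma two_mul_ωh_add_notMem_lattice {τ η : ℂ} (hτ : 0 < τ.im)
    (hgen : ∀ n : ℕ, 0 < n → ¬ ∃ m l : ℤ, (n : ℂ) * η = (m : ℂ) + τ * l) (t : Fin 4) {k : ℤ}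
    (hk : k ≠ 0) : 2 * (ωh τ t + k * η) ∉ (upperPeriodPair hτ).lattice := by
  intro h
  have double : 2 * (k : ℂ) * η ∈ (upperPeriodPair hτ).lattice := by
    rwa [mul_add, ← mul_assoc, add_mem_cancel_left (two_mul_ωh_mem_lattice hτ t)] at h
  have natAbs : (2 * k.natAbs : ℕ) * η ∈ (upperPeriodPair hτ).lattice := by
    obtain hk' | hk' := Int.natAbs_eq k <;>
    · rw [hk'] at double
      simpa using double
  exact hgen _ (by lia) ((mem_lattice_upperPeriodPair hτ).mp natAbs)

lemma memM_symmetrize {τ η ν : ℂ} {t : Fin 4} {F : ℂ → ℂ} (hmero : ∀ z, MeromorphicAt F z)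
    (hpole : RegularAt (fun z => (z - ωh τ t) * F z) (ωh τ t))
    (hreg : ∀ k : ℤ, k ≠ 0 → RegularAt F (ωh τ t + k * η)) :
    memM τ η ν t (symmetrize (lamh ν t / η) (ωh τ t) F) := by
  refine ⟨fun z _ => symmetrize.meromorphicAt (hmero _) (hmero _), fun k => ?_, fun z => ?_⟩
  · obtain rfl | hk := eq_or_ne k 0
    · rw [Int.cast_zero, zero_mul, add_zero]
      exact symmetrize.regularAt_center hpole
    · have reflect : 2 * ωh τ t - (ωh τ t + k * η) = ωh τ t + (-k : ℤ) * η := by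
        push_cast
        ring
      refine symmetrize.regularAt (hreg k hk) ?_
      rw [reflect]
      exact hreg (-k) (neg_ne_zero.mpr hk)
  · rw [symmetrize.apply_sub, div_mul_eq_mul_div]

lemma fcoef_neg_mul_eq {τ η ν : ℂ} (hη : η ≠ 0) {a : Fin 4 → ℂ} (ha : ∑ i, a i = 0) {t : Fin 4}
    {g : ℂ → ℂ} (hg : ∀ z, g (ωh τ t - z) = cexp (lamh ν t * z / η) * g (ωh τ t + z)) (z : ℂ) :
    fcoef τ a ν (-z) * g (z - η) = cexp (-(lamh ν t / η * (z - ωh τ t))) *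
      (fcoef τ a ν (2 * ωh τ t - z) * g (2 * ωh τ t - z + η)) := by
  have hf := fcoef.add_two_mul_ωh τ ha ν (-z) t
  have hg := hg (η - (z - ωh τ t))
  have exponent : lamh ν t * (η - (z - ωh τ t)) / η =
      lamh ν t + -(lamh ν t / η * (z - ωh τ t)) := by
    field_simp
    ring
  have left : ωh τ t - (η - (z - ωh τ t)) = z - η := by ring
  have right : ωh τ t + (η - (z - ωh τ t)) = 2 * ωh τ t - z + η := by ring
  rw [neg_add_eq_sub] at hf
  rw [exponent, left, right, exp_add] at hg
  rw [hf, hg]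
  ring

/-- if `nη ∉ Λ` for all positive integers `n`, then the Sklyanin
difference operator `A(a,ν)` maps each space `ℳ_t` into itself. -/
theorem statement1 (τ : ℂ) (hτ : 0 < τ.im) (η : ℂ) (hη : η ≠ 0)
    (hgen : ∀ n : ℕ, 0 < n → ¬ ∃ m l : ℤ, (n : ℂ) * η = (m : ℂ) + τ * l)
    (ν : ℂ) (a : Fin 4 → ℂ) (ha : (∑ i, a i) = 0) (t : Fin 4)
    (g : ℂ → ℂ) (hg : memM τ η ν t g) :
    memM τ η ν t (fun z => fcoef τ a ν z * g (z + η) + fcoef τ a ν (-z) * g (z - η)) := by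
  obtain ⟨hmero, hreg, hsymm⟩ := hg
  simp only [fcoef_neg_mul_eq hη ha hsymm]
  have shift : ∀ k : ℤ, RegularAt (fun z => g (z + η)) (ωh τ t + k * η) := fun k =>
    RegularAt.comp_injective (φ := fun z => z + η) (by
      simpa only [Int.cast_add, Int.cast_one, add_one_mul, add_assoc] using hreg (k + 1))
      (by fun_prop) (add_left_injective η)
  refine memM_symmetrize (F := fun z => fcoef τ a ν z * g (z + η)) (fun z => ?_) ?_
    fun k hk => ?_
  · exact (fcoef.meromorphicAt hτ a ν z).mul
      ((hmero (z + η) trivial).comp_analyticAt (g := fun z => z + η) (by fun_prop))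
  · have shift_zero := shift 0
    rw [Int.cast_zero, zero_mul, add_zero] at shift_zero
    simpa only [mul_assoc] using (fcoef.regularAt_sub_mul hτ a ν (ωh τ t)).mul shift_zero
  · refine RegularAt.mul (.of_analyticAt (fcoef.analyticAt hτ a ν ?_)) (shift k)
    rw [Ne, θ.eq_zero_iff hτ]
    exact two_mul_ωh_add_notMem_lattice hτ hgen t hk
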